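/- arXiv:1305.4444 — 3 statements merged into one kernel-verified Lean document; each statement's English description precedes it below -/
import Mathlib

section
/- For every i ∈ {1,…,V} one has d(C^⊥) − 1 ≤ r_i(C) ≤ V − d(C) + 1, and moreover max{r_i(C) : i = 1,…,V} = V − d(C) + 1. -/
open Matrix

/-- The dual code of a linear code `C ⊆ 𝔽_q^V`:
`C^⊥ = {x ∈ 𝔽_q^V : x·c = 0 for all c ∈ C}`. -/
def dualCode {F : Type*} [Field F] {V : ℕ} (C : Submodule F (Fin V → F)) :
    Submodule F (Fin V → F) where
  carrier := {x | ∀ c ∈ C, x ⬝ᵥ c = 0}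
  add_mem' := fun ha hb c hc => by
    simp only [Set.mem_setOf_eq] at *
    simp [add_dotProduct, ha c hc, hb c hc]
  zero_mem' := fun c _ => by simp
  smul_mem' := fun a x hx => by
    intro c hc
    simp only [Set.mem_setOf_eq] at hx
    simp [smul_dotProduct, hx c hc]

/-!
A substitution set for `i` is a set of coordinates from which the `i`-th coordinate of a codeword
can be computed by a fixed linear formula. If no such formula exists for `B`, then the coordinate
functionals indexed by `B` do not span the `i`-th one on `C`, so some codeword vanishes on `B` but
not at `i`. Adversary sets for `i` are therefore the subsets of zero sets of codewords that are
nonzero at `i`; over all `i`, the largest is the zero set of a codeword of minimum weight. If a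
formula does exist, moving everything to one side turns it into a dual word supported on `B ∪ {i}`,
whose weight is at most `#B + 1`.
-/

section HammingWeight

variable {ι F : Type*} [Fintype ι] [Zero F] [DecidableEq F]

/-- The weights of the nonzero words of a code; its least element is the minimum distance of the
code when the code is linear. The code is a bare set because for a general index type its dual is
given by the orthogonality relations alone. -/
def nonzeroWeights (S : Set (ι → F)) : Set ℕ :=
  {w | ∃ c ∈ S, c ≠ 0 ∧ hammingNorm c = w}

theorem hammingNorm_le_card_of_forall_notMem {x : ι → F} {B : Finset ι}
    (hx : ∀ j ∉ B, x j = 0) : hammingNorm x ≤ B.card :=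
  Finset.card_le_card fun j hj ↦ not_imp_comm.1 (hx j) (Finset.mem_filter.1 hj).2

theorem card_filter_eq_zero_add_hammingNorm (x : ι → F) :
    (Finset.univ.filter fun j ↦ x j = 0).card + hammingNorm x = Fintype.card ι :=
  Finset.card_filter_add_card_filter_not _

theorem card_add_hammingNorm_le_of_forall_mem {x : ι → F} {B : Finset ι}
    (hx : ∀ j ∈ B, x j = 0) : B.card + hammingNorm x ≤ Fintype.card ι := by
  rw [← card_filter_eq_zero_add_hammingNorm x]
  gcongr
  exact fun j hj ↦ Finset.mem_filter.2 ⟨Finset.mem_univ j, hx j hj⟩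

end HammingWeight

section SubstitutionSet

variable {ι κ F : Type*} [Field F]

/-- `B` is a substitution set for the coordinate `i` of the code generated by the rows of `G`.
The case `i ∈ B` is not excluded here but in `substitutionSizes`. -/
def IsSubstitutionSet (G : Matrix κ ι F) (i : ι) (B : Finset ι) : Prop :=
  G.col i ∈ Submodule.span F (G.col '' B)

/-- The cardinalities `ρ` such that every `ρ`-element set of coordinates avoiding `i` is a
substitution set for `i`; the least element of this set is the number `r_i` of the code. -/
def substitutionSizes (G : Matrix κ ι F) (i : ι) : Set ℕ :=
  {ρ | ∀ B : Finset ι, i ∉ B → B.card = ρ → IsSubstitutionSet G i B}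

variable {G : Matrix κ ι F} {C : Submodule F (ι → F)} {i : ι} {B : Finset ι} {ρ : ℕ}

theorem isSubstitutionSet_iff_exists_coeff (hG : Submodule.span F (Set.range G.row) = C) :
    IsSubstitutionSet G i B ↔ ∃ a : ι → F, ∀ c ∈ C, c i = ∑ j ∈ B, a j * c j := by
  subst hG
  rw [IsSubstitutionSet, Submodule.mem_span_image_finset_iff_exists_fun']
  refine exists_congr fun a ↦ ⟨fun ha c hc ↦ ?_, fun ha ↦ ?_⟩
  · let coord (j : ι) : (ι → F) →ₗ[F] F := LinearMap.proj j
    let combination : (ι → F) →ₗ[F] F := ∑ j ∈ B, a j • coord j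
    have eqOn_rows : Set.EqOn (coord i) combination (Set.range G.row) := by
      rintro _ ⟨s, rfl⟩
      simpa [coord, combination] using (congrFun ha s).symm
    simpa [coord, combination] using LinearMap.eqOn_span eqOn_rows hc
  · ext s
    simpa using (ha (G.row s) (Submodule.subset_span ⟨s, rfl⟩)).symm

theorem isSubstitutionSet_iff_forall_eq_zero (hG : Submodule.span F (Set.range G.row) = C) :
    IsSubstitutionSet G i B ↔ ∀ c ∈ C, (∀ j ∈ B, c j = 0) → c i = 0 := by
  rw [isSubstitutionSet_iff_exists_coeff hG]
  refine ⟨fun ⟨a, ha⟩ c hc hcB ↦ ?_, fun h ↦ ?_⟩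
  · rw [ha c hc]
    exact Finset.sum_eq_zero fun j hj ↦ by rw [hcB j hj, mul_zero]
  · let coord (j : ι) : C →ₗ[F] F := LinearMap.proj j ∘ₗ C.subtype
    have ker_le : ⨅ j : B, LinearMap.ker (coord j) ≤ LinearMap.ker (coord i) := by
      intro c hc
      simp only [Submodule.mem_iInf, LinearMap.mem_ker] at hc
      exact h c c.2 fun j hj ↦ hc ⟨j, hj⟩
    have coord_mem : coord i ∈ Submodule.span F (coord '' B) := by
      rw [Set.image_eq_range]
      exact mem_span_of_iInf_ker_le_ker ker_le
    obtain ⟨a, ha⟩ := (Submodule.mem_span_image_finset_iff_exists_fun' F).1 coord_mem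
    exact ⟨a, fun c hc ↦ by simpa [coord] using (LinearMap.congr_fun ha ⟨c, hc⟩).symm⟩

variable [Fintype ι]

theorem IsSubstitutionSet.exists_orthogonal (hG : Submodule.span F (Set.range G.row) = C)
    (hB : IsSubstitutionSet G i B) (hi : i ∉ B) :
    ∃ x : ι → F, (∀ c ∈ C, x ⬝ᵥ c = 0) ∧ x i ≠ 0 ∧ ∀ j ∉ B, j ≠ i → x j = 0 := by
  classical
  obtain ⟨a, ha⟩ := (isSubstitutionSet_iff_exists_coeff hG).1 hB
  refine ⟨Pi.single i 1 - fun j ↦ if j ∈ B then a j else 0, fun c hc ↦ ?_, ?_, fun j hj hji ↦ ?_⟩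
  · rw [sub_dotProduct, single_one_dotProduct, sub_eq_zero, ha c hc]
    simp [dotProduct]
  · simp [hi]
  · simp [hj, hji]

variable [DecidableEq F]

theorem mem_substitutionSizes_of_card_lt_add (hG : Submodule.span F (Set.range G.row) = C) {d : ℕ}
    (hd : d ∈ lowerBounds (nonzeroWeights (C : Set (ι → F)))) (hρ : Fintype.card ι < ρ + d) :
    ρ ∈ substitutionSizes G i := by
  rintro B - rfl
  refine (isSubstitutionSet_iff_forall_eq_zero hG).2 fun c hc hcB ↦ ?_
  by_contra hci
  have d_le : d ≤ hammingNorm c := hd ⟨c, hc, fun h ↦ hci (congrFun h i), rfl⟩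
  have := card_add_hammingNorm_le_of_forall_mem hcB
  omega

theorem card_lt_add_hammingNorm_of_mem_substitutionSizes
    (hG : Submodule.span F (Set.range G.row) = C) (hρ : ρ ∈ substitutionSizes G i)
    {c : ι → F} (hc : c ∈ C) (hci : c i ≠ 0) : Fintype.card ι < ρ + hammingNorm c := by
  by_contra! h
  have card_zeros := card_filter_eq_zero_add_hammingNorm c
  obtain ⟨B, hB, hBρ⟩ := Finset.exists_subset_card_eq
    (s := Finset.univ.filter fun j ↦ c j = 0) (n := ρ) (by omega)
  have c_eq_zero : ∀ j ∈ B, c j = 0 := fun j hj ↦ (Finset.mem_filter.1 (hB hj)).2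
  have hBi : IsSubstitutionSet G i B := hρ B (fun hi ↦ hci (c_eq_zero i hi)) hBρ
  exact hci ((isSubstitutionSet_iff_forall_eq_zero hG).1 hBi c hc c_eq_zero)

theorem exists_orthogonal_hammingNorm_le (hG : Submodule.span F (Set.range G.row) = C)
    (hρ : ρ ∈ substitutionSizes G i) (hlt : ρ < Fintype.card ι) :
    ∃ x : ι → F, (∀ c ∈ C, x ⬝ᵥ c = 0) ∧ x ≠ 0 ∧ hammingNorm x ≤ ρ + 1 := by
  classical
  obtain ⟨B, hB, rfl⟩ := Finset.exists_subset_card_eq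
    (s := Finset.univ.erase i) (n := ρ) (by
      rw [Finset.card_erase_of_mem (Finset.mem_univ i), Finset.card_univ]
      exact Nat.le_sub_one_of_lt hlt)
  have hi : i ∉ B := fun h ↦ Finset.notMem_erase i _ (hB h)
  obtain ⟨x, hxC, hxi, hx⟩ := (hρ B hi rfl).exists_orthogonal hG hi
  refine ⟨x, hxC, fun h ↦ hxi (congrFun h i), ?_⟩
  rw [← Finset.card_insert_of_notMem hi]
  refine hammingNorm_le_card_of_forall_notMem fun j hj ↦ ?_
  rw [Finset.mem_insert, not_or] at hj
  exact hx j hj.2 hj.1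

theorem le_add_one_of_mem_substitutionSizes (hG : Submodule.span F (Set.range G.row) = C) {d : ℕ}
    (hd : IsLeast (nonzeroWeights {x : ι → F | ∀ c ∈ C, x ⬝ᵥ c = 0}) d)
    (hρ : ρ ∈ substitutionSizes G i) : d ≤ ρ + 1 := by
  obtain hlt | hle := lt_or_ge ρ (Fintype.card ι)
  · obtain ⟨x, hxC, hx0, hx⟩ := exists_orthogonal_hammingNorm_le hG hρ hlt
    exact (hd.2 ⟨x, hxC, hx0, rfl⟩).trans hx
  · obtain ⟨x, -, -, rfl⟩ := hd.1
    exact hammingNorm_le_card_fintype.trans (hle.trans ρ.le_succ)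

theorem stmt_11_general (hG : Submodule.span F (Set.range G.row) = C) {d d' : ℕ}
    (hd : IsLeast (nonzeroWeights (C : Set (ι → F))) d)
    (hd' : IsLeast (nonzeroWeights {x : ι → F | ∀ c ∈ C, x ⬝ᵥ c = 0}) d')
    {r : ι → ℕ} (hr : ∀ i, IsLeast (substitutionSizes G i) (r i)) :
    (∀ i, d' - 1 ≤ r i ∧ r i ≤ Fintype.card ι - d + 1) ∧
      IsGreatest (Set.range r) (Fintype.card ι - d + 1) := by
  have upper (i : ι) : r i ≤ Fintype.card ι - d + 1 :=
    (hr i).2 (mem_substitutionSizes_of_card_lt_add hG hd.2 (by omega))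
  have lower (i : ι) : d' - 1 ≤ r i :=
    Nat.sub_le_of_le_add (le_add_one_of_mem_substitutionSizes hG hd' (hr i).1)
  refine ⟨fun i ↦ ⟨lower i, upper i⟩, ?_, Set.forall_mem_range.2 upper⟩
  obtain ⟨c, hc, hc0, rfl⟩ := hd.1
  obtain ⟨i, hci⟩ := Function.ne_iff.1 hc0
  have attained := card_lt_add_hammingNorm_of_mem_substitutionSizes hG (hr i).1 hc hci
  have := hammingNorm_le_card_fintype (x := c)
  exact ⟨i, (upper i).antisymm (by omega)⟩

end SubstitutionSet

/-- With `r_i(C)` the smallest `ρ` such that every subset of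
`{1,…,V}\{i}` of cardinality `ρ` is a substitution set for `i`, one has
`d(C^⊥) − 1 ≤ r_i(C) ≤ V − d(C) + 1` for every `i`, and
`max{r_i(C) : i} = V − d(C) + 1`. -/
theorem stmt_11 {F : Type*} [Field F] [Fintype F] [DecidableEq F] {V k : ℕ}
    (hV : 0 < V)
    (C : Submodule F (Fin V → F)) (hCk : Module.finrank F C = k)
    (G : Matrix (Fin k) (Fin V) F)
    (hGspan : Submodule.span F (Set.range fun i : Fin k => G i) = C)
    (hGli : LinearIndependent F (fun i : Fin k => G i))
    (dC : ℕ)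
    (hdC : IsLeast {w | ∃ c ∈ C, c ≠ 0 ∧ hammingNorm c = w} dC)
    (hdC2 : 2 ≤ dC)
    (d' : ℕ)
    (hd' : IsLeast {w | ∃ c ∈ dualCode C, c ≠ 0 ∧ hammingNorm c = w} d')
    (hd'2 : 2 ≤ d')
    (r : Fin V → ℕ)
    (hr : ∀ i : Fin V,
      IsLeast {ρ : ℕ | ∀ B : Finset (Fin V), i ∉ B → B.card = ρ →
        (fun s => G s i) ∈
          Submodule.span F ((fun j => fun s => G s j) '' (B : Set (Fin V)))} (r i)) :
    (∀ i : Fin V, d' - 1 ≤ r i ∧ r i ≤ V - dC + 1) ∧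
      IsGreatest (Set.range r) (V - dC + 1) := by
  simpa only [Fintype.card_fin] using stmt_11_general (G := G) hGspan hdC hd' hr
end

section
/- If C is a maximum distance separable (MDS) code, i.e., d(C) = V − k + 1, then for every i ∈ {1,…,V} a subset A ⊆ {1,…,V}\{i} is an adversary set for i if and only if |A| ≤ d(C^⊥) − 2; that is, the adversary sets for i are exactly the subsets of cardinality at most d(C^⊥) − 2. -/
open Matrix

/-!
A linear functional `φ` on the column space `F^k` yields the codeword `(φ(g_j))_j`, so MDS says
that no nonzero functional vanishes at more than `k - 1` columns. Hence any `k` columns span `F^k`,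
that is, they form a basis: the columns are in linear general position. Two consequences finish the
proof. First, `g_i` lies outside the span of the columns in `A` iff `|A| < k`. Second, the words of
the dual code are the linear relations among the columns, and the shortest nontrivial relation has
`k + 1` terms, so `d(C^⊥) = k + 1`.
-/

section GeneralPosition

variable {F ι E : Type*} [DivisionRing F] [AddCommGroup E] [Module F E] {g : ι → E}
  {s : Finset ι}

theorem span_image_eq_top_of_card_compl_lt_hammingNorm [Fintype ι] [DecidableEq ι] [DecidableEq F]
    (h : ∀ φ : E →ₗ[F] F, φ ≠ 0 → sᶜ.card < hammingNorm fun j => φ (g j)) :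
    Submodule.span F (g '' s) = ⊤ := by
  by_contra hspan
  obtain ⟨φ, hφ, hker⟩ := Submodule.exists_le_ker_of_lt_top _ (lt_top_iff_ne_top.2 hspan)
  have hsupp : ({j | φ (g j) ≠ 0} : Finset ι) ⊆ sᶜ := fun j hj => by
    rw [Finset.mem_compl]
    exact fun hjs => (Finset.mem_filter.1 hj).2 (hker (Submodule.subset_span ⟨j, hjs, rfl⟩))
  exact (h φ hφ).not_ge (Finset.card_le_card hsupp)

theorem linearIndepOn_iff_span_image_eq_top_of_card_eq_finrank [FiniteDimensional F E]
    (hs : s.card = Module.finrank F E) :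
    LinearIndepOn F g s ↔ Submodule.span F (g '' s) = ⊤ := by
  have hcard : Fintype.card (s : Set ι) = Module.finrank F E := by simpa using hs
  rw [Set.image_eq_range]
  exact ⟨fun hli => LinearIndependent.span_eq_top_of_card_eq_finrank' hli hcard,
    fun hspan => linearIndependent_of_top_le_span_of_card_eq_finrank hspan.ge hcard⟩

theorem exists_relation_hammingNorm_le [Fintype ι] [DecidableEq F] [FiniteDimensional F E]
    (g : ι → E) (hcard : Module.finrank F E < Fintype.card ι) :
    ∃ x : ι → F, ∑ j, x j • g j = 0 ∧ x ≠ 0 ∧ hammingNorm x ≤ Module.finrank F E + 1 := by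
  classical
  obtain ⟨t, -, ht⟩ := Finset.exists_subset_card_eq (s := (Finset.univ : Finset ι)) hcard
  have hdep : ¬LinearIndepOn F g t := fun hli => by
    simpa [ht] using LinearIndependent.fintype_card_le_finrank hli
  obtain ⟨f, hf, i, hit, hfi⟩ := not_linearIndepOn_finset_iff.1 hdep
  refine ⟨fun j => if j ∈ t then f j else 0, ?_, fun hzero => hfi ?_, ?_⟩
  · simpa [ite_smul] using hf
  · simpa [hit] using congrFun hzero i
  · refine (Finset.card_le_card fun j hj => ?_).trans ht.le
    by_contra hjt
    simp [hjt] at hj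

/-- A family `g` in a vector space `E` is in linear general position if any `finrank F E` of its
members are linearly independent. Smaller subfamilies are included in the definition, so that it
is not void when the index type has fewer than `finrank F E` elements. -/
def InLinearGeneralPosition (F : Type*) {ι E : Type*} [DivisionRing F] [AddCommGroup E]
    [Module F E] (g : ι → E) : Prop :=
  ∀ s : Finset ι, s.card ≤ Module.finrank F E → LinearIndepOn F g s

namespace InLinearGeneralPosition

theorem of_lt_hammingNorm [Fintype ι] [DecidableEq F]
    (h : ∀ φ : E →ₗ[F] F, φ ≠ 0 →
      Fintype.card ι - Module.finrank F E < hammingNorm fun j => φ (g j)) :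
    InLinearGeneralPosition F g := by
  classical
  have hspan {t : Finset ι} (ht : tᶜ.card ≤ Fintype.card ι - Module.finrank F E) :
      Submodule.span F (g '' t) = ⊤ :=
    span_image_eq_top_of_card_compl_lt_hammingNorm fun φ hφ => ht.trans_lt (h φ hφ)
  have huniv : Submodule.span F (Set.range g) = ⊤ := by
    simpa using hspan (t := Finset.univ) (by simp)
  have : FiniteDimensional F E :=
    Module.finite_def.2 (huniv ▸ Submodule.fg_span (Set.finite_range g))
  have hcard : Module.finrank F E ≤ Fintype.card ι := by
    rw [← finrank_top F E, ← huniv]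
    exact finrank_range_le_card g
  intro s hs
  obtain ⟨t, hst, ht⟩ := Finset.exists_superset_card_eq hs hcard
  have hbasis : LinearIndepOn F g t :=
    (linearIndepOn_iff_span_image_eq_top_of_card_eq_finrank ht).2
      (hspan (by rw [Finset.card_compl, ht]))
  exact hbasis.mono (Finset.coe_subset.2 hst)

theorem notMem_span_image_iff [FiniteDimensional F E] (hg : InLinearGeneralPosition F g) {i : ι}
    (hi : i ∉ s) : g i ∉ Submodule.span F (g '' s) ↔ s.card < Module.finrank F E := by
  classical
  constructor
  · contrapose!
    intro hs
    obtain ⟨t, hts, ht⟩ := Finset.exists_subset_card_eq hs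
    have htop : Submodule.span F (g '' t) = ⊤ :=
      (linearIndepOn_iff_span_image_eq_top_of_card_eq_finrank ht).1 (hg t ht.le)
    exact Submodule.span_mono (Set.image_mono (Finset.coe_subset.2 hts)) (htop ▸ Submodule.mem_top)
  · intro hs
    have hli := hg (insert i s) ((Finset.card_insert_le i s).trans hs)
    rw [Finset.coe_insert] at hli
    exact hli.notMem_span_of_insert hi

variable [Fintype ι] [DecidableEq F]

theorem finrank_lt_hammingNorm (hg : InLinearGeneralPosition F g) {x : ι → F} (hx : x ≠ 0)
    (hrel : ∑ j, x j • g j = 0) : Module.finrank F E < hammingNorm x := by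
  by_contra! hcard
  have hsum : ∑ j with x j ≠ 0, x j • g j = 0 := by
    rw [← hrel]
    exact Fintype.sum_subset fun j hj => by simpa using left_ne_zero_of_smul hj
  have hzero := linearIndepOn_finset_iff.1 (hg _ hcard) x hsum
  exact hx (funext fun j => by_contra fun hj => hj (hzero j (by simpa using hj)))

theorem isLeast_hammingNorm_relation [FiniteDimensional F E] (hg : InLinearGeneralPosition F g)
    (hcard : Module.finrank F E < Fintype.card ι) :
    IsLeast {w | ∃ x : ι → F, ∑ j, x j • g j = 0 ∧ x ≠ 0 ∧ hammingNorm x = w}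
      (Module.finrank F E + 1) := by
  obtain ⟨x, hrel, hx, hle⟩ := exists_relation_hammingNorm_le g hcard
  refine ⟨⟨x, hrel, hx, hle.antisymm (hg.finrank_lt_hammingNorm hx hrel)⟩, ?_⟩
  rintro _ ⟨y, hy, hy0, rfl⟩
  exact hg.finrank_lt_hammingNorm hy0 hy

end InLinearGeneralPosition

end GeneralPosition

section GeneratorMatrix

variable {F m n : Type*}

theorem dual_apply_col_mem_span_row [CommSemiring F] [Finite m] (G : Matrix m n F)
    (φ : Module.Dual F (m → F)) :
    (fun j => φ (G.col j)) ∈ Submodule.span F (Set.range G.row) := by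
  classical
  cases nonempty_fintype m
  obtain ⟨y, rfl⟩ := (dotProductEquiv F m).surjective φ
  change y ᵥ* G ∈ _
  rw [vecMul_eq_sum]
  exact Submodule.sum_smul_mem _ _ fun s _ => Submodule.subset_span ⟨s, rfl⟩

theorem dual_apply_col_ne_zero [CommSemiring F] [Finite m] {G : Matrix m n F}
    (hG : LinearIndependent F G.row) {φ : Module.Dual F (m → F)} (hφ : φ ≠ 0) :
    (fun j => φ (G.col j)) ≠ 0 := by
  classical
  cases nonempty_fintype m
  obtain ⟨y, rfl⟩ := (dotProductEquiv F m).surjective φ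
  have hy : y ≠ 0 := fun h => hφ (by rw [h, map_zero])
  change y ᵥ* G ≠ 0
  exact fun hzero => hy (vecMul_injective_iff.2 hG (hzero.trans (zero_vecMul G).symm))

theorem mem_dualCode_span_row_iff [Field F] {V : ℕ} (G : Matrix m (Fin V) F) (x : Fin V → F) :
    x ∈ dualCode (Submodule.span F (Set.range G.row)) ↔ ∑ j, x j • G.col j = 0 := by
  calc x ∈ dualCode (Submodule.span F (Set.range G.row))
      ↔ Submodule.span F (Set.range G.row) ≤ LinearMap.ker (dotProductEquiv F (Fin V) x) := Iff.rfl
    _ ↔ ∀ s, x ⬝ᵥ G s = 0 := by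
      rw [Submodule.span_le, Set.range_subset_iff]
      rfl
    _ ↔ ∑ j, x j • G.col j = 0 := by
      simp [funext_iff, dotProduct]

end GeneratorMatrix

theorem stmt_15_general {F : Type*} [Field F] [DecidableEq F] {V k : ℕ}
    (C : Submodule F (Fin V → F)) (G : Matrix (Fin k) (Fin V) F)
    (hGspan : Submodule.span F (Set.range G.row) = C) (hGli : LinearIndependent F G.row)
    (hMDS : IsLeast {w | ∃ c ∈ C, c ≠ 0 ∧ hammingNorm c = w} (V - k + 1))
    {d' : ℕ} (hd' : IsLeast {w | ∃ c ∈ dualCode C, c ≠ 0 ∧ hammingNorm c = w} d')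
    (i : Fin V) (A : Finset (Fin V)) (hi : i ∉ A) :
    G.col i ∉ Submodule.span F (G.col '' A) ↔ A.card ≤ d' - 2 := by
  subst hGspan
  have hg : InLinearGeneralPosition F G.col := .of_lt_hammingNorm fun φ hφ => by
    simpa using hMDS.2 ⟨_, dual_apply_col_mem_span_row G φ, dual_apply_col_ne_zero hGli hφ, rfl⟩
  have hk : k ≠ 0 := by
    rintro rfl
    obtain ⟨c, hc, hc0, -⟩ := hMDS.1
    exact hc0 (by simpa using hc)
  have hkV : k < V := by
    obtain ⟨x, hx, hx0, -⟩ := hd'.1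
    simpa using (hg.finrank_lt_hammingNorm hx0 ((mem_dualCode_span_row_iff G x).1 hx)).trans_le
      hammingNorm_le_card_fintype
  have hdual : d' = k + 1 := by
    simp only [mem_dualCode_span_row_iff] at hd'
    simpa using hd'.unique (hg.isLeast_hammingNorm_relation (by simpa using hkV))
  rw [hg.notMem_span_image_iff hi, Module.finrank_fin_fun]
  omega

/-- If `C` is MDS, i.e. `d(C) = V − k + 1`, then for every `i` a
subset `A ⊆ {1,…,V}\{i}` is an adversary set for `i` (i.e. `g_i` is not in the
`𝔽_q`-span of `{g_j : j ∈ A}`) iff `|A| ≤ d(C^⊥) − 2`. -/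
theorem stmt_15 {F : Type*} [Field F] [Fintype F] [DecidableEq F] {V k : ℕ}
    (C : Submodule F (Fin V → F)) (hCk : Module.finrank F C = k)
    (G : Matrix (Fin k) (Fin V) F)
    (hGspan : Submodule.span F (Set.range fun i : Fin k => G i) = C)
    (hGli : LinearIndependent F (fun i : Fin k => G i))
    (dC : ℕ)
    (hdC : IsLeast {w | ∃ c ∈ C, c ≠ 0 ∧ hammingNorm c = w} dC)
    (hdC2 : 2 ≤ dC)
    (d' : ℕ)
    (hd' : IsLeast {w | ∃ c ∈ dualCode C, c ≠ 0 ∧ hammingNorm c = w} d')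
    (hd'2 : 2 ≤ d')
    (hMDS : dC = V - k + 1) :
    ∀ i : Fin V, ∀ A : Finset (Fin V), i ∉ A →
      ((fun s => G s i) ∉
          Submodule.span F ((fun j => fun s => G s j) '' (A : Set (Fin V))) ↔
        A.card ≤ d' - 2) :=
  stmt_15_general C G hGspan hGli (hMDS ▸ hdC) hd'
end

section
/- For any i ∈ {1,…,V}, a subset A ⊆ {1,…,V}\{i} is an adversary set for i if and only if A ∪ {i} does not contain the support of any codeword of C^⊥ that is minimal with respect to i. -/
open Matrix

/-- A codeword `c` of a code `D ⊆ 𝔽_q^V` is minimal with respect to coordinate `i`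
if `c ∈ D`, `c_i = 1`, and there is no other codeword of `D` whose `i`-th component
is `1` with support strictly contained in that of `c`. -/
def IsMinimalWrt {F : Type*} [Field F] {V : ℕ} (D : Submodule F (Fin V → F))
    (i : Fin V) (c : Fin V → F) : Prop :=
  c ∈ D ∧ c i = 1 ∧
    ¬ ∃ c' ∈ D, c' ≠ c ∧ c' i = 1 ∧ Function.support c' ⊂ Function.support c

/-!
A dual codeword is a linear relation between the columns of `G`. Such a relation with coefficient
`1` at `i` and support in `A ∪ {i}` is, up to sign, a way of writing `g_i` as a combination of
`{g_j : j ∈ A}`. Since supports are finite, the support of every such relation contains that of a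
minimal one.
-/

section Span

variable {R M ι : Type*} [Ring R] [AddCommGroup M] [Module R M] {v : ι → M} {i : ι} {s : Set ι}

-- `c ↦ single i 1 - c` exchanges the expansions of `v i` and the relations with coefficient `1`.
theorem mem_span_image_iff_exists_linearCombination_eq_zero (hi : i ∉ s) :
    v i ∈ Submodule.span R (v '' s) ↔
      ∃ c : ι →₀ R, Finsupp.linearCombination R v c = 0 ∧ c i = 1 ∧
        Function.support c ⊆ insert i s := by
  rw [Finsupp.mem_span_image_iff_linearCombination]
  constructor
  · rintro ⟨l, hls, hlv⟩
    have hl_zero : ∀ j ∉ s, l j = 0 := (Finsupp.mem_supported' R l).mp hls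
    refine ⟨Finsupp.single i 1 - l, by simp [hlv], by simp [hl_zero i hi], ?_⟩
    refine Function.support_subset_iff'.mpr fun j hj => ?_
    obtain ⟨hji, hjs⟩ := not_or.mp hj
    simp [hl_zero j hjs, hji]
  · rintro ⟨c, hcv, hci, hcs⟩
    refine ⟨Finsupp.single i 1 - c, (Finsupp.mem_supported' R _).mpr fun j hjs => ?_, by simp [hcv]⟩
    obtain rfl | hji := eq_or_ne j i
    · simp [hci]
    · have hcj : c j = 0 := Function.support_subset_iff'.mp hcs j (not_or.mpr ⟨hji, hjs⟩)
      simp [hcj, hji]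

theorem mem_span_image_iff_exists_sum_smul_eq_zero [Fintype ι] (hi : i ∉ s) :
    v i ∈ Submodule.span R (v '' s) ↔
      ∃ c : ι → R, ∑ j, c j • v j = 0 ∧ c i = 1 ∧ Function.support c ⊆ insert i s := by
  rw [mem_span_image_iff_exists_linearCombination_eq_zero hi,
    Finsupp.equivFunOnFinite.exists_congr_left]
  simp [Finsupp.linearCombination_apply, Finsupp.sum_fintype]

end Span

section Code

variable {F : Type*} [Field F] {V : ℕ}

theorem mem_dualCode_span {S : Set (Fin V → F)} {x : Fin V → F} :
    x ∈ dualCode (Submodule.span F S) ↔ ∀ c ∈ S, x ⬝ᵥ c = 0 :=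
  Submodule.span_le (p := LinearMap.ker (dotProductBilin F F x))

theorem mem_dualCode_span_range_row {κ : Type*} {G : Matrix κ (Fin V) F} {x : Fin V → F} :
    x ∈ dualCode (Submodule.span F (Set.range G.row)) ↔ ∑ j, x j • G.col j = 0 := by
  rw [mem_dualCode_span, Set.forall_mem_range]
  simp [funext_iff, dotProduct]

theorem exists_isMinimalWrt_support_subset {D : Submodule F (Fin V → F)} {i : Fin V}
    {c : Fin V → F} (hc : c ∈ D) (hci : c i = 1) :
    ∃ m, IsMinimalWrt D i m ∧ Function.support m ⊆ Function.support c := by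
  obtain ⟨m, ⟨hm, hmi, hmc⟩, hmin⟩ := exists_minimalFor_of_wellFoundedLT
    (fun m => m ∈ D ∧ m i = 1 ∧ Function.support m ⊆ Function.support c) Function.support
    ⟨c, hc, hci, subset_rfl⟩
  refine ⟨m, ⟨hm, hmi, ?_⟩, hmc⟩
  rintro ⟨m', hm', -, hmi', hlt⟩
  exact hlt.not_subset (hmin ⟨hm', hmi', hlt.subset.trans hmc⟩ hlt.subset)

theorem exists_isMinimalWrt_support_subset_iff {D : Submodule F (Fin V → F)} {i : Fin V}
    {S : Set (Fin V)} :
    (∃ c, IsMinimalWrt D i c ∧ Function.support c ⊆ S) ↔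
      ∃ c ∈ D, c i = 1 ∧ Function.support c ⊆ S := by
  constructor
  · rintro ⟨c, ⟨hc, hci, -⟩, hcS⟩
    exact ⟨c, hc, hci, hcS⟩
  · rintro ⟨c, hc, hci, hcS⟩
    obtain ⟨m, hm, hmc⟩ := exists_isMinimalWrt_support_subset hc hci
    exact ⟨m, hm, hmc.trans hcS⟩

theorem stmt_17_general {κ : Type*} (C : Submodule F (Fin V → F)) (G : Matrix κ (Fin V) F)
    (hG : Submodule.span F (Set.range G.row) = C) (i : Fin V) (A : Set (Fin V)) (hiA : i ∉ A) :
    G.col i ∉ Submodule.span F (G.col '' A) ↔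
      ¬ ∃ c, IsMinimalWrt (dualCode C) i c ∧ Function.support c ⊆ A ∪ {i} := by
  subst hG
  rw [exists_isMinimalWrt_support_subset_iff, mem_span_image_iff_exists_sum_smul_eq_zero hiA,
    Set.union_singleton]
  simp only [mem_dualCode_span_range_row]

end Code

/-- For any `i`, a subset `A ⊆ {1,…,V}\{i}` is an adversary set for
`i` (i.e. `g_i` is not in the `𝔽_q`-span of `{g_j : j ∈ A}`) iff `A ∪ {i}` does not
contain the support of any codeword of `C^⊥` minimal with respect to `i`. -/
theorem stmt_17 {F : Type*} [Field F] [Fintype F] [DecidableEq F] {V k : ℕ}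
    (C : Submodule F (Fin V → F)) (hCk : Module.finrank F C = k)
    (hdC : ∀ c ∈ C, c ≠ 0 → 2 ≤ hammingNorm c)
    (hdD : ∀ c ∈ dualCode C, c ≠ 0 → 2 ≤ hammingNorm c)
    (G : Matrix (Fin k) (Fin V) F)
    (hGspan : Submodule.span F (Set.range fun i : Fin k => G i) = C)
    (hGli : LinearIndependent F (fun i : Fin k => G i))
    (i : Fin V) (A : Set (Fin V)) (hiA : i ∉ A) :
    (fun s => G s i) ∉ Submodule.span F ((fun j => fun s => G s j) '' A) ↔
      ¬ ∃ c, IsMinimalWrt (dualCode C) i c ∧ Function.support c ⊆ A ∪ {i} :=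
  stmt_17_general C G hGspan i A hiA
end
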